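/- arXiv:1602.00768 — 3 statements merged into one kernel-verified Lean document; each statement's English description precedes it below -/
import Mathlib

section
/- For x ∈ S_n', the following are equivalent: (i) dim ker x = 2; (ii) ker x = span{u_1, u_{m+n+1}}; (iii) x u_1 = x u_{m+n+1} = 0, i.e. the matrix entries x_{m+n,1}, x_{m+2n,1}, x_{m+n,m+n+1}, x_{m+2n,m+n+1} all vanish. (Content of Lemma 2.2 of the paper: when x has two-dimensional kernel, the kernel is span{e_1, f_1}.) -/
/-!
Outside the rows `m+n` and `m+2n`, where an element `x` of the slice is arbitrary, `x` acts as
`z_n`, so `(x v)_i = v_{i+1}`. Hence `x v = 0` forces every coordinate of `v` other than the first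
and the `(m+n+1)`-st to vanish: `ker x` always lies in the plane `span{u_1, u_{m+n+1}}`. So `ker x`
has dimension two exactly when it is this plane, that is, when `x` kills both spanning vectors.
As `z_n` kills them, `x u_1` and `x u_{m+n+1}` can be nonzero only in the rows `m+n` and `m+2n`.
-/

open Module BigOperators

noncomputable section

/-- The `k`-th standard basis vector `u_k` of `ℂ^(m+2n)`, indexed `1`-based;
it is zero if `k` is out of the range `1, …, m+2n`. -/
def stdVec (m n : ℕ) (k : ℕ) : Fin (m + 2*n) → ℂ := fun i => if (i : ℕ) + 1 = k then 1 else 0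

/-- The matrix of the two-block nilpotent `z_n` of Jordan type `(m+n, n)`:
`z_n u_i = u_{i-1}` for `2 ≤ i ≤ m+n` and for `m+n+2 ≤ i ≤ m+2n`, and
`z_n u_1 = z_n u_{m+n+1} = 0`. -/
def zMat (m n : ℕ) : Matrix (Fin (m + 2*n)) (Fin (m + 2*n)) ℂ :=
  fun i j => if (j : ℕ) = (i : ℕ) + 1 ∧ (j : ℕ) ≠ m + n then 1 else 0

/-- The two-block nilpotent `z_n` as an endomorphism of `ℂ^(m+2n)`. -/
def zn (m n : ℕ) : Module.End ℂ (Fin (m + 2*n) → ℂ) := Matrix.toLin' (zMat m n)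

/-- The enlarged slice `S_n' ⊆ End(ℂ^(m+2n))`: the endomorphisms whose matrix agrees
with that of `z_n` outside rows `m+n` and `m+2n`, i.e. `x u_j - z_n u_j` lies in
`span{u_{m+n}, u_{m+2n}}` for every `j`. -/
def slice' (m n : ℕ) : Set (Module.End ℂ (Fin (m + 2*n) → ℂ)) :=
  { x | ∀ j : ℕ, x (stdVec m n j) - zn m n (stdVec m n j) ∈
      Submodule.span ℂ {stdVec m n (m + n), stdVec m n (m + 2*n)} }

/-- The matrix entry `x_{p,q}` (`1`-based) of an endomorphism of `ℂ^(m+2n)`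
in the standard basis `u_1, …, u_{m+2n}`. -/
def entry (m n : ℕ) (x : Module.End ℂ (Fin (m + 2*n) → ℂ)) (p q : ℕ) : ℂ :=
  ∑ i, stdVec m n p i * x (stdVec m n q) i

section StdVec

variable {m n : ℕ}

theorem stdVec_succ (i : Fin (m + 2 * n)) : stdVec m n (i + 1) = Pi.single i 1 := by
  ext j
  simp [stdVec, Pi.single_apply, Fin.ext_iff]

theorem mem_span_stdVec_pair {p q : ℕ} {v : Fin (m + 2 * n) → ℂ} :
    v ∈ Submodule.span ℂ {stdVec m n p, stdVec m n q} ↔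
      ∀ i : Fin (m + 2 * n), (i : ℕ) + 1 ≠ p → (i : ℕ) + 1 ≠ q → v i = 0 := by
  constructor
  · intro hv i hp hq
    obtain ⟨a, b, rfl⟩ := Submodule.mem_span_pair.1 hv
    simp [stdVec, hp, hq]
  · intro hv
    rw [pi_eq_sum_univ' v]
    refine Submodule.sum_mem _ fun i _ => ?_
    rw [← stdVec_succ]
    by_cases hi : (i : ℕ) + 1 = p ∨ (i : ℕ) + 1 = q
    · refine Submodule.smul_mem _ _ (Submodule.subset_span ?_)
      exact hi.imp (congrArg (stdVec m n)) (congrArg (stdVec m n))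
    · obtain ⟨hp, hq⟩ := not_or.1 hi
      simp [hv i hp hq]

theorem finrank_span_stdVec_pair {i j : Fin (m + 2 * n)} (hij : i ≠ j) :
    finrank ℂ (Submodule.span ℂ {stdVec m n (i + 1), stdVec m n (j + 1)}) = 2 := by
  have hli : LinearIndependent ℂ (Pi.basisFun ℂ (Fin (m + 2 * n)) ∘ ![i, j]) :=
    (Pi.basisFun ℂ _).linearIndependent.comp _ (by simpa using hij)
  have hrank := finrank_span_eq_card hli
  rw [Set.range_comp, Matrix.range_cons_cons_empty, Set.image_pair, Fintype.card_fin] at hrank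
  rwa [stdVec_succ, stdVec_succ, ← Pi.basisFun_apply, ← Pi.basisFun_apply]

theorem entry_succ (x : Module.End ℂ (Fin (m + 2 * n) → ℂ)) (i : Fin (m + 2 * n)) (q : ℕ) :
    entry m n x (i + 1) q = x (stdVec m n q) i := by
  simp [entry, stdVec_succ, Pi.single_apply]

end StdVec

section Slice

variable {m n : ℕ}

theorem zn_apply (v : Fin (m + 2 * n) → ℂ) (i : Fin (m + 2 * n)) :
    zn m n v i =
      if h : (i : ℕ) + 1 < m + 2 * n ∧ (i : ℕ) + 1 ≠ m + n then v ⟨i + 1, h.1⟩ else 0 := by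
  rw [zn, Matrix.toLin'_apply, Matrix.mulVec, dotProduct]
  split_ifs with h
  · rw [Finset.sum_eq_single ⟨i + 1, h.1⟩]
    · simp [zMat, h.2]
    · intro j _ hj
      simp [zMat, mt (Fin.ext (b := ⟨i + 1, h.1⟩)) hj]
    · simp
  · refine Finset.sum_eq_zero fun j _ => ?_
    have hj : ¬((j : ℕ) = i + 1 ∧ (j : ℕ) ≠ m + n) := by omega
    simp [zMat, hj]

theorem zn_stdVec_one : zn m n (stdVec m n 1) = 0 := by
  ext i
  simp [zn_apply, stdVec]

theorem zn_stdVec_add_add_one : zn m n (stdVec m n (m + n + 1)) = 0 := by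
  ext i
  simp +contextual [zn_apply, stdVec]

variable {x : Module.End ℂ (Fin (m + 2 * n) → ℂ)}

theorem mem_slice'_iff :
    x ∈ slice' m n ↔ ∀ (v : Fin (m + 2 * n) → ℂ) (i : Fin (m + 2 * n)),
      (i : ℕ) + 1 ≠ m + n → (i : ℕ) + 1 ≠ m + 2 * n → x v i = zn m n v i := by
  simp only [slice', Set.mem_ofPred_eq, mem_span_stdVec_pair, Pi.sub_apply, sub_eq_zero]
  refine ⟨fun hx v i h₁ h₂ => ?_, fun hx j => hx _⟩
  have hrow : LinearMap.proj i ∘ₗ x = LinearMap.proj i ∘ₗ zn m n := by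
    refine (Pi.basisFun ℂ (Fin (m + 2 * n))).ext fun j => ?_
    simpa [stdVec_succ] using hx (j + 1) i h₁ h₂
  exact LinearMap.congr_fun hrow v

theorem ker_le_span_of_mem_slice' (hx : x ∈ slice' m n) :
    LinearMap.ker x ≤ Submodule.span ℂ {stdVec m n 1, stdVec m n (m + n + 1)} := by
  intro v hv
  refine mem_span_stdVec_pair.2 fun j hj₁ hj₂ => ?_
  obtain ⟨k, hk⟩ : ∃ k, (j : ℕ) = k + 1 := Nat.exists_eq_add_one.2 (by omega)
  let i : Fin (m + 2 * n) := ⟨k, by omega⟩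
  have hi : (i : ℕ) + 1 < m + 2 * n ∧ (i : ℕ) + 1 ≠ m + n := by
    simp only [i]
    omega
  calc v j = zn m n v i := by
        rw [zn_apply, dif_pos hi]
        exact congrArg v (Fin.ext hk)
    _ = x v i := (mem_slice'_iff.1 hx v i hi.2 hi.1.ne).symm
    _ = 0 := congrFun hv i

theorem ker_eq_span_iff_of_mem_slice' (hx : x ∈ slice' m n) :
    LinearMap.ker x = Submodule.span ℂ {stdVec m n 1, stdVec m n (m + n + 1)} ↔
      x (stdVec m n 1) = 0 ∧ x (stdVec m n (m + n + 1)) = 0 := by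
  rw [← (ker_le_span_of_mem_slice' hx).ge_iff_eq, Submodule.span_le, Set.pair_subset_iff]
  rfl

theorem finrank_ker_eq_two_iff_of_mem_slice' (hn : 1 ≤ n) (hx : x ∈ slice' m n) :
    finrank ℂ (LinearMap.ker x) = 2 ↔
      LinearMap.ker x = Submodule.span ℂ {stdVec m n 1, stdVec m n (m + n + 1)} := by
  have hplane : finrank ℂ (Submodule.span ℂ {stdVec m n 1, stdVec m n (m + n + 1)}) = 2 :=
    finrank_span_stdVec_pair (i := ⟨0, by omega⟩) (j := ⟨m + n, by omega⟩)
      (Fin.ne_of_val_ne (by simp only; omega))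
  exact ⟨fun h => Submodule.eq_of_le_of_finrank_eq (ker_le_span_of_mem_slice' hx)
    (h.trans hplane.symm), fun h => h ▸ hplane⟩

theorem apply_stdVec_eq_zero_iff_of_mem_slice' (hx : x ∈ slice' m n) {q : ℕ}
    (hq : zn m n (stdVec m n q) = 0) :
    x (stdVec m n q) = 0 ↔ entry m n x (m + n) q = 0 ∧ entry m n x (m + 2 * n) q = 0 := by
  refine ⟨fun h => by simp [entry, h], fun ⟨h₁, h₂⟩ => funext fun i => ?_⟩
  by_cases hi₁ : (i : ℕ) + 1 = m + n
  · rwa [← hi₁, entry_succ] at h₁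
  by_cases hi₂ : (i : ℕ) + 1 = m + 2 * n
  · rwa [← hi₂, entry_succ] at h₂
  · rw [mem_slice'_iff.1 hx _ i hi₁ hi₂, hq]

end Slice

/-- For `x ∈ S_n'`, the following are equivalent:
(i) `dim ker x = 2`; (ii) `ker x = span{u_1, u_{m+n+1}}`;
(iii) `x u_1 = x u_{m+n+1} = 0`; (iv) the matrix entries
`x_{m+n,1}, x_{m+2n,1}, x_{m+n,m+n+1}, x_{m+2n,m+n+1}` all vanish. -/
theorem slice'_two_dim_ker_tfae (m n : ℕ) (hn : 1 ≤ n)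
    (x : Module.End ℂ (Fin (m + 2*n) → ℂ)) (hx : x ∈ slice' m n) :
    List.TFAE [
      Module.finrank ℂ (LinearMap.ker x) = 2,
      LinearMap.ker x = Submodule.span ℂ {stdVec m n 1, stdVec m n (m + n + 1)},
      x (stdVec m n 1) = 0 ∧ x (stdVec m n (m + n + 1)) = 0,
      entry m n x (m + n) 1 = 0 ∧ entry m n x (m + 2*n) 1 = 0 ∧
        entry m n x (m + n) (m + n + 1) = 0 ∧ entry m n x (m + 2*n) (m + n + 1) = 0 ] := by
  tfae_have 1 ↔ 2 := finrank_ker_eq_two_iff_of_mem_slice' hn hx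
  tfae_have 2 ↔ 3 := ker_eq_span_iff_of_mem_slice' hx
  tfae_have 3 ↔ 4 := by
    rw [apply_stdVec_eq_zero_iff_of_mem_slice' hx zn_stdVec_one,
      apply_stdVec_eq_zero_iff_of_mem_slice' hx zn_stdVec_add_add_one, and_assoc]
  tfae_finish
end
end

section
/- Fix 1 ≤ k ≤ m+2n−1. Suppose x ∈ S_n and (V_i)_{i ∈ {0,…,m+2n} \ {k}} is a partial flag in ℂ^{m+2n} (subspaces with dim V_i = i, V_0 = 0, V_{m+2n} = ℂ^{m+2n}, and V_i ⊆ V_j whenever i ≤ j) such that x V_{k+1} ⊆ V_{k−1} and x V_i ⊆ V_{i−1} for all i ∉ {k, k+1} with i ≥ 1. Then dim ker x = 2, ker x ⊆ V_{k+1}, and x V_{k+1} = V_{k−1}. (Step in the proof of Proposition 2.3 of the paper.) -/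
/-!
Away from rows `m + n` and `m + 2n`, an element `x` of the slice acts as the shift `z_n`, so a
vector of `ker x` is determined by its coordinates `1` and `m + n + 1`, and `dim ker x ≤ 2`. But
`x` maps `V_{k+1}` into a space of dimension two less, so by rank-nullity
`dim (ker x ∩ V_{k+1}) ≥ 2`, with equality only if `x V_{k+1}` fills `V_{k-1}`. Hence all these
inequalities are equalities.
-/

open Module BigOperators

noncomputable section

/-- The Mirkovic–Vybornov slice `S_n ⊆ S_n'`: for `n ≥ 1` it consists of those
`x ∈ S_n'` whose matrix entries `x_{m+2n, j}` vanish for `n+1 ≤ j ≤ m+n`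
(for `n = 0` the slices `S_0` and `S_0'` coincide, so no further condition is imposed). -/
def MVslice (m n : ℕ) : Set (Module.End ℂ (Fin (m + 2*n) → ℂ)) :=
  { x | x ∈ slice' m n ∧
      ∀ j : ℕ, n + 1 ≤ j → j ≤ m + n → n ≠ 0 → entry m n x (m + 2*n) j = 0 }

section LinearAlgebra

theorem finrank_le_card_of_forall_eq_zero {R ι : Type*} [Ring R] [StrongRankCondition R]
    {p : Submodule R (ι → R)} (s : Finset ι) (h : ∀ v ∈ p, (∀ i ∈ s, v i = 0) → v = 0) :
    finrank R p ≤ s.card := by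
  let restrict : p →ₗ[R] s → R := (LinearMap.funLeft R R Subtype.val).domRestrict p
  have restrict_injective : Function.Injective restrict := by
    rw [injective_iff_map_eq_zero]
    exact fun v hv ↦ Subtype.ext (h v v.2 fun i hi ↦ congrFun hv ⟨i, hi⟩)
  simpa using LinearMap.finrank_le_finrank_of_injective restrict_injective

variable {K E F : Type*} [DivisionRing K] [AddCommGroup E] [Module K E] [AddCommGroup F]
  [Module K F]

theorem finrank_map_add_finrank_ker_inf (f : E →ₗ[K] F) (W : Submodule K E)
    [FiniteDimensional K W] :
    finrank K (W.map f) + finrank K (LinearMap.ker f ⊓ W : Submodule K E) = finrank K W := by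
  rw [← LinearMap.finrank_range_add_finrank_ker (f.domRestrict W), LinearMap.range_domRestrict,
    LinearMap.ker_domRestrict, inf_comm, ← Submodule.map_comap_subtype,
    Submodule.finrank_map_subtype_eq]

theorem finrank_ker_eq_and_ker_le_and_map_eq {f : E →ₗ[K] F} {U : Submodule K F}
    {W : Submodule K E} {d : ℕ} [FiniteDimensional K (LinearMap.ker f)] [FiniteDimensional K U]
    [FiniteDimensional K W] (hker : finrank K (LinearMap.ker f) ≤ d)
    (hdim : finrank K U + d ≤ finrank K W) (hmap : W.map f ≤ U) :
    finrank K (LinearMap.ker f) = d ∧ LinearMap.ker f ≤ W ∧ W.map f = U := by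
  have hrank := finrank_map_add_finrank_ker_inf f W
  have hmap_le : finrank K (W.map f) ≤ finrank K U := Submodule.finrank_mono hmap
  have hinf_le : finrank K (LinearMap.ker f ⊓ W : Submodule K E) ≤ finrank K (LinearMap.ker f) :=
    Submodule.finrank_mono inf_le_left
  have hinf_eq : LinearMap.ker f ⊓ W = LinearMap.ker f :=
    Submodule.eq_of_le_of_finrank_eq inf_le_left (by omega)
  exact ⟨by omega, inf_eq_left.1 hinf_eq, Submodule.eq_of_le_of_finrank_eq hmap (by omega)⟩

end LinearAlgebra

section Slice

variable {m n : ℕ} {x : Module.End ℂ (Fin (m + 2 * n) → ℂ)} {v : Fin (m + 2 * n) → ℂ}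
  {i j : Fin (m + 2 * n)}

theorem stdVec_val_add_one (j : Fin (m + 2 * n)) : stdVec m n (j + 1) = Pi.single j 1 := by
  ext i
  simp [stdVec, Pi.single_apply, Fin.ext_iff]

theorem zn_apply_of_val_eq_add_one (v : Fin (m + 2 * n) → ℂ) (hij : (j : ℕ) = i + 1)
    (hj : (j : ℕ) ≠ m + n) : zn m n v i = v j := by
  have hrow : zMat m n i = Pi.single j 1 := by
    ext l
    have : ((l : ℕ) = i + 1 ∧ (l : ℕ) ≠ m + n) ↔ l = j := by
      rw [Fin.ext_iff]
      omega
    simp [zMat, Pi.single_apply, this]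
  rw [zn, Matrix.toLin'_apply, Matrix.mulVec, hrow, single_one_dotProduct]

theorem apply_eq_zn_apply_of_mem_slice' (hx : x ∈ slice' m n) (v : Fin (m + 2 * n) → ℂ)
    (hi : (i : ℕ) + 1 ≠ m + n) (hi' : (i : ℕ) + 1 ≠ m + 2 * n) : x v i = zn m n v i := by
  suffices hcoord : LinearMap.proj i ∘ₗ x = LinearMap.proj i ∘ₗ zn m n from
    LinearMap.congr_fun hcoord v
  refine LinearMap.pi_ext' fun j ↦ LinearMap.ext_ring ?_
  obtain ⟨a, b, hab⟩ := Submodule.mem_span_pair.1 (hx (j + 1))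
  have hsub : x (Pi.single j 1) i - zn m n (Pi.single j 1) i = 0 := by
    simpa [stdVec_val_add_one, stdVec, hi, hi'] using (congrFun hab i).symm
  simpa using sub_eq_zero.1 hsub

theorem eq_zero_of_mem_ker_of_mem_slice' (hx : x ∈ slice' m n) (hv : v ∈ LinearMap.ker x)
    (hj : (j : ℕ) ≠ 0) (hj' : (j : ℕ) ≠ m + n) : v j = 0 := by
  let i : Fin (m + 2 * n) := ⟨j - 1, by omega⟩
  have hij : (j : ℕ) = i + 1 := by
    simp only [i]
    omega
  calc
    v j = zn m n v i := (zn_apply_of_val_eq_add_one v hij hj').symm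
    _ = x v i := (apply_eq_zn_apply_of_mem_slice' hx v (by omega) (by omega)).symm
    _ = 0 := congrFun hv i

theorem finrank_ker_le_two_of_mem_slice' (hx : x ∈ slice' m n) :
    finrank ℂ (LinearMap.ker x) ≤ 2 := by
  let s : Finset (Fin (m + 2 * n)) := {j | (j : ℕ) = 0 ∨ (j : ℕ) = m + n}
  have hs : s.card ≤ 2 :=
    (Finset.card_le_card_of_injOn (t := {0, m + n}) Fin.val (by intro j; simp [s])
      Fin.val_injective.injOn).trans Finset.card_le_two
  refine (finrank_le_card_of_forall_eq_zero s fun v hv hvs ↦ funext fun j ↦ ?_).trans hs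
  by_cases hj : j ∈ s
  · exact hvs j hj
  · obtain ⟨hj₀, hj₁⟩ : (j : ℕ) ≠ 0 ∧ (j : ℕ) ≠ m + n := by simpa [s] using hj
    exact eq_zero_of_mem_ker_of_mem_slice' hx hv hj₀ hj₁

theorem partial_flag_ker_eq_two_general (hx : x ∈ slice' m n)
    {U W : Submodule ℂ (Fin (m + 2 * n) → ℂ)} (hdim : finrank ℂ U + 2 ≤ finrank ℂ W)
    (hmap : W.map x ≤ U) :
    finrank ℂ (LinearMap.ker x) = 2 ∧ LinearMap.ker x ≤ W ∧ W.map x = U :=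
  finrank_ker_eq_and_ker_le_and_map_eq (finrank_ker_le_two_of_mem_slice' hx) hdim hmap

end Slice

/-- If `x ∈ S_n` admits a partial flag `(V_i)_{i ∈ {0,…,m+2n}∖{k}}`
with `x V_{k+1} ⊆ V_{k−1}` and `x V_i ⊆ V_{i−1}` for the remaining indices, then
`dim ker x = 2`, `ker x ⊆ V_{k+1}`, and `x V_{k+1} = V_{k−1}`. -/
theorem partial_flag_ker_eq_two (m n k : ℕ) (hn : 1 ≤ n) (hk1 : 1 ≤ k)
    (hk2 : k ≤ m + 2*n - 1)
    (x : Module.End ℂ (Fin (m + 2*n) → ℂ)) (hx : x ∈ MVslice m n)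
    (V : {i : ℕ // i ≤ m + 2*n ∧ i ≠ k} → Submodule ℂ (Fin (m + 2*n) → ℂ))
    (hdim : ∀ i, Module.finrank ℂ (V i) = i.val)
    (hbot : ∀ i, i.val = 0 → V i = ⊥)
    (htop : ∀ i, i.val = m + 2*n → V i = ⊤)
    (hmono : ∀ i j, i.val ≤ j.val → V i ≤ V j)
    (hxk : ∀ i j, i.val = k + 1 → j.val = k - 1 → ∀ v ∈ V i, x v ∈ V j)
    (hxstep : ∀ i j, i.val = j.val + 1 → ∀ v ∈ V i, x v ∈ V j) :
    Module.finrank ℂ (LinearMap.ker x) = 2 ∧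
    LinearMap.ker x ≤ V ⟨k + 1, by omega⟩ ∧
    (V ⟨k + 1, by omega⟩).map x = V ⟨k - 1, by omega⟩ :=
  partial_flag_ker_eq_two_general hx.1 (by simp only [hdim]; omega)
    (Submodule.map_le_iff_le_comap.2 (hxk _ _ rfl rfl))
end
end

section
/- Let L ⊆ V be a subspace such that z L ⊆ L and such that P restricts to a linear isomorphism from L onto W. Then the endomorphism x := P ∘ z ∘ (P|_L)^{−1} of W ≅ ℂ^N belongs to S_n', i.e. x u_j − z_n u_j ∈ span{u_{m+n}, u_{m+2n}} for every j. (Well-definedness step in the proof of Lemma 2.7 of the paper: P z P^{−1} lies in the slice S_n'.) -/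
/-! `P` records some of the coordinates of `v`, and `z`, `z_n` shift coordinates within blocks.
Away from the last row of a block of `W`, both `P ∘ z` and `z_n ∘ P` therefore read off the same
coordinate of `v`: the successor of a recorded coordinate is again recorded, next to it. The rows
`m+n` and `m+2n` are the exceptions, because there `P` cuts a block of `V` short. -/

open Module BigOperators

noncomputable section

/-- The standard basis of `V = ℂ^(2(m+2n))`, indexed `1`-based: for `1 ≤ k ≤ m+2n`,
`bigVec k` is `ê_k`, and for `1 ≤ j ≤ m+2n`, `bigVec (m+2n+j)` is `f̂_j`. -/
def bigVec (m n : ℕ) (k : ℕ) : Fin (2*(m + 2*n)) → ℂ := fun i => if (i : ℕ) + 1 = k then 1 else 0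

/-- The matrix of `z ∈ End(V)`, `z ê_i = ê_{i-1}`, `z f̂_j = f̂_{j-1}` (`ê_0 = f̂_0 = 0`). -/
def bigZMat (m n : ℕ) : Matrix (Fin (2*(m + 2*n))) (Fin (2*(m + 2*n))) ℂ :=
  fun i j => if (j : ℕ) = (i : ℕ) + 1 ∧ (j : ℕ) ≠ m + 2*n then 1 else 0

/-- The endomorphism `z` of `V = ℂ^(2(m+2n))`. -/
def bigZ (m n : ℕ) : Module.End ℂ (Fin (2*(m + 2*n)) → ℂ) := Matrix.toLin' (bigZMat m n)

/-- The matrix of the projection `P : V → W ≅ ℂ^(m+2n)`: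
`P ê_i = u_i` for `i ≤ m+n`, `P ê_i = 0` for `i > m+n`,
`P f̂_j = u_{m+n+j}` for `j ≤ n`, `P f̂_j = 0` for `j > n`. -/
def projMat (m n : ℕ) : Matrix (Fin (m + 2*n)) (Fin (2*(m + 2*n))) ℂ :=
  fun i j => if ((j : ℕ) = (i : ℕ) ∧ (i : ℕ) < m + n) ∨
      ((j : ℕ) = (i : ℕ) + n ∧ m + n ≤ (i : ℕ)) then 1 else 0

/-- The projection `P : V → W ≅ ℂ^(m+2n)` (composed with the identification `W ≅ ℂ^(m+2n)`
via `ê_i ↦ u_i`, `f̂_j ↦ u_{m+n+j}`). -/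
def proj (m n : ℕ) : (Fin (2*(m + 2*n)) → ℂ) →ₗ[ℂ] (Fin (m + 2*n) → ℂ) :=
  Matrix.toLin' (projMat m n)

section CoordinateMaps

variable {R ι κ : Type*} [CommSemiring R] [Fintype κ] [DecidableEq κ]

theorem toLin'_apply_of_row_eq_single {M : Matrix ι κ R} {i : ι} {k : κ}
    (hrow : M i = Pi.single k 1) (v : κ → R) : Matrix.toLin' M v i = v k := by
  rw [Matrix.toLin'_apply, Matrix.mulVec, hrow, single_one_dotProduct]

variable (R) in
/-- The nilpotent shift matrix of size `N` with two Jordan blocks, the second one starting at the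
`0`-based index `p`. Both `zMat m n` and `bigZMat m n` are of this form. -/
def twoBlockShift (N p : ℕ) : Matrix (Fin N) (Fin N) R :=
  fun i j => if (j : ℕ) = (i : ℕ) + 1 ∧ (j : ℕ) ≠ p then 1 else 0

theorem toLin'_twoBlockShift_apply {N p : ℕ} {i k : Fin N} (hk : (k : ℕ) = i + 1)
    (hp : (k : ℕ) ≠ p) (v : Fin N → R) : Matrix.toLin' (twoBlockShift R N p) v i = v k := by
  refine toLin'_apply_of_row_eq_single (funext fun j => ?_) v
  simp only [twoBlockShift, Pi.single_apply, Fin.ext_iff]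
  congr 1
  grind

end CoordinateMaps

section Slice

variable {m n : ℕ}

theorem basisFun_eq_stdVec (i : Fin (m + 2 * n)) : Pi.basisFun ℂ _ i = stdVec m n (i + 1) := by
  ext k
  simp only [Pi.basisFun_apply, Pi.single_apply, stdVec, Fin.ext_iff, Nat.add_right_cancel_iff]

theorem spanSubset_le_span_stdVec_image (S : Set ℕ) :
    Pi.spanSubset ℂ {i : Fin (m + 2 * n) | (i : ℕ) + 1 ∈ S} ≤
      Submodule.span ℂ (stdVec m n '' S) := by
  refine Submodule.span_mono ?_
  rintro _ ⟨i, hi, rfl⟩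
  exact ⟨i + 1, hi, (basisFun_eq_stdVec i).symm⟩

theorem mem_slice'_of_apply_eq {x : Module.End ℂ (Fin (m + 2 * n) → ℂ)}
    (hx : ∀ (j : ℕ) (i : Fin (m + 2 * n)), (i : ℕ) + 1 ≠ m + n → (i : ℕ) + 1 ≠ m + 2 * n →
      x (stdVec m n j) i = zn m n (stdVec m n j) i) :
    x ∈ slice' m n := by
  intro j
  rw [← Set.image_pair]
  refine spanSubset_le_span_stdVec_image _ (Pi.mem_spanSubset_iff.2 fun i hi => ?_)
  obtain ⟨hi₁, hi₂⟩ : (i : ℕ) + 1 ≠ m + n ∧ (i : ℕ) + 1 ≠ m + 2 * n := by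
    simpa only [Set.mem_ofPred_eq, Set.mem_insert_iff, Set.mem_singleton_iff, not_or] using hi
  rw [Pi.sub_apply, hx j i hi₁ hi₂, sub_self]

end Slice

section Projection

variable {m n : ℕ}

/-- The inclusion of the `0`-based indices of the basis of `W` into those of the basis of `V`:
the block `ê_1, …, ê_{m+n}` stays in place, and `f̂_1, …, f̂_n` moves up by `n`. -/
def blockInclusion (i : Fin (m + 2 * n)) : Fin (2 * (m + 2 * n)) :=
  ⟨if (i : ℕ) < m + n then i else i + n, by split_ifs <;> omega⟩

theorem blockInclusion_of_eq_succ {i k : Fin (m + 2 * n)} (hk : (k : ℕ) = i + 1)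
    (hne : (k : ℕ) ≠ m + n) : (blockInclusion k : ℕ) = blockInclusion i + 1 := by
  simp only [blockInclusion]
  split_ifs <;> omega

theorem blockInclusion_ne_of_ne {k : Fin (m + 2 * n)} (hne : (k : ℕ) ≠ m + n) :
    (blockInclusion k : ℕ) ≠ m + 2 * n := by
  simp only [blockInclusion]
  split_ifs <;> omega

theorem proj_apply (v : Fin (2 * (m + 2 * n)) → ℂ) (i : Fin (m + 2 * n)) :
    proj m n v i = v (blockInclusion i) := by
  refine toLin'_apply_of_row_eq_single (funext fun j => ?_) v
  simp only [projMat, blockInclusion, Pi.single_apply, Fin.ext_iff]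
  congr 1
  grind

theorem proj_bigZ_apply_eq_zn_proj_apply (v : Fin (2 * (m + 2 * n)) → ℂ) {i : Fin (m + 2 * n)}
    (hi₁ : (i : ℕ) + 1 ≠ m + n) (hi₂ : (i : ℕ) + 1 ≠ m + 2 * n) :
    proj m n (bigZ m n v) i = zn m n (proj m n v) i := by
  let k : Fin (m + 2 * n) := ⟨i + 1, by omega⟩
  calc proj m n (bigZ m n v) i
      = bigZ m n v (blockInclusion i) := proj_apply _ i
    _ = v (blockInclusion k) :=
        toLin'_twoBlockShift_apply (blockInclusion_of_eq_succ rfl hi₁)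
          (blockInclusion_ne_of_ne hi₁) v
    _ = proj m n v k := (proj_apply v k).symm
    _ = zn m n (proj m n v) i := (toLin'_twoBlockShift_apply rfl hi₁ _).symm

end Projection

theorem z_stable_lift_mem_slice'_general (m n : ℕ) (L : Set (Fin (2 * (m + 2 * n)) → ℂ))
    (hsurj : Set.SurjOn (proj m n) L Set.univ)
    (x : Module.End ℂ (Fin (m + 2 * n) → ℂ))
    (hxdef : ∀ v ∈ L, proj m n (bigZ m n v) = x (proj m n v)) :
    x ∈ slice' m n := by
  refine mem_slice'_of_apply_eq fun j i hi₁ hi₂ => ?_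
  obtain ⟨v, hv, hvj⟩ := hsurj (Set.mem_univ (stdVec m n j))
  rw [← hvj, ← hxdef v hv]
  exact proj_bigZ_apply_eq_zn_proj_apply v hi₁ hi₂

/-- If `L ⊆ V` is a `z`-stable subspace such that `P` restricts to a
linear isomorphism from `L` onto `W ≅ ℂ^(m+2n)`, then the endomorphism
`x = P ∘ z ∘ (P|_L)⁻¹` of `W ≅ ℂ^(m+2n)` belongs to the slice `S_n'`. -/
theorem z_stable_lift_mem_slice' (m n : ℕ) (hn : 1 ≤ n)
    (L : Submodule ℂ (Fin (2*(m + 2*n)) → ℂ))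
    (hzL : ∀ v ∈ L, bigZ m n v ∈ L)
    (hbij : Function.Bijective ((proj m n).domRestrict L))
    (x : Module.End ℂ (Fin (m + 2*n) → ℂ))
    (hxdef : ∀ v ∈ L, proj m n (bigZ m n v) = x (proj m n v)) :
    x ∈ slice' m n := by
  refine z_stable_lift_mem_slice'_general m n L (fun w _ => ?_) x hxdef
  obtain ⟨v, hv⟩ := hbij.surjective w
  exact ⟨v, v.2, hv⟩
end
end
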